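/- Let Σ and Σ̂ be d×d positive semidefinite symmetric matrices, and let P̂_⊥ be the orthogonal projection onto the complement of the d_r-dimensional leading eigensubspace of Σ̂. Then tr(P̂_⊥ Σ P̂_⊥) ≤ Σ_{i=d_r+1}^d λ_i(Σ̂) + √(d_r)·‖Σ̂ − Σ‖_F + tr(Σ − Σ̂). -/

import Mathlib

open Matrix

/-- Frobenius norm of a real matrix. -/
noncomputable def frob {d : ℕ} (A : Matrix (Fin d) (Fin d) ℝ) : ℝ :=
  Real.sqrt (∑ i, ∑ j, (A i j) ^ 2)

/-!
Let `P = V Vᴴ`. Compressing to the complement of `P` removes `tr(PS)` from the trace, so replacing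
`S` by `A` changes the compressed trace by `tr(S - A) + tr(P(A - S))`. The last term is a Frobenius
inner product, which Cauchy–Schwarz bounds by `‖P‖_F ‖A - S‖_F`, and `‖P‖_F = √(tr P)`.
Finally, `tr A - tr(PA)` is the sum of the eigenvalues that do not belong to the columns of `V`.
-/

section Trace

variable {R n r : Type*} [Fintype n] [Fintype r]

lemma isIdempotentElem_mul_of_mul_eq_one [Semiring R] [DecidableEq r] {V : Matrix n r R}
    {W : Matrix r n R} (hWV : W * V = 1) : IsIdempotentElem (V * W) := by
  rw [IsIdempotentElem, Matrix.mul_assoc, ← Matrix.mul_assoc W, hWV, Matrix.one_mul]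

lemma isStarProjection_mul_conjTranspose [Semiring R] [StarRing R] [DecidableEq r]
    {V : Matrix n r R} (hV : Vᴴ * V = 1) : IsStarProjection (V * Vᴴ) where
  isIdempotentElem := isIdempotentElem_mul_of_mul_eq_one hV
  isSelfAdjoint := isHermitian_mul_conjTranspose_self V

lemma mul_eq_mul_diagonal_of_mulVec_col [CommSemiring R] [DecidableEq r] {A : Matrix n n R}
    {V : Matrix n r R} {c : r → R} (h : ∀ j, A *ᵥ V.col j = c j • V.col j) :
    A * V = V * diagonal c := by
  ext i j
  rw [mul_diagonal, mul_comm]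
  exact congrFun (h j) i

lemma trace_mul_mul_eq_of_intertwining [CommSemiring R] [DecidableEq r] {V : Matrix n r R}
    {W : Matrix r n R} {A : Matrix n n R} {D : Matrix r r R} (hWV : W * V = 1)
    (hAV : A * V = V * D) : (V * W * A).trace = D.trace := by
  rw [Matrix.mul_assoc, trace_mul_comm, Matrix.mul_assoc, hAV, ← Matrix.mul_assoc, hWV,
    Matrix.one_mul]

variable [CommRing R] [DecidableEq n]

lemma trace_one_sub_mul_mul_one_sub {P : Matrix n n R} (hP : IsIdempotentElem P)
    (A : Matrix n n R) : ((1 - P) * A * (1 - P)).trace = A.trace - (P * A).trace := by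
  rw [trace_mul_comm, ← Matrix.mul_assoc, hP.one_sub.eq, Matrix.sub_mul, Matrix.one_mul, trace_sub]

lemma trace_one_sub_mul_mul_one_sub_eq_sum_compl [DecidableEq r] {A : Matrix n n R} {μ : n → R}
    (hμ : A.trace = ∑ i, μ i) (e : r ↪ n) {V : Matrix n r R} {W : Matrix r n R} (hWV : W * V = 1)
    (hEig : ∀ j, A *ᵥ V.col j = μ (e j) • V.col j) :
    ((1 - V * W) * A * (1 - V * W)).trace = ∑ i ∈ (Finset.univ.map e)ᶜ, μ i := by
  rw [trace_one_sub_mul_mul_one_sub (isIdempotentElem_mul_of_mul_eq_one hWV),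
    trace_mul_mul_eq_of_intertwining hWV (mul_eq_mul_diagonal_of_mulVec_col hEig),
    trace_diagonal, hμ, sub_eq_iff_eq_add, ← Finset.sum_compl_add_sum (Finset.univ.map e) μ,
    Finset.sum_map]

end Trace

section Frobenius

open RCLike
open scoped Matrix.Norms.Frobenius

variable {𝕜 m n r : Type*} [RCLike 𝕜] [Fintype m] [Fintype n] [Fintype r]

lemma frobenius_norm_eq_norm_toLp (A : Matrix m n 𝕜) :
    ‖A‖ = ‖WithLp.toLp 2 fun i ↦ WithLp.toLp 2 (A i)‖ := rfl

lemma trace_conjTranspose_mul_eq_inner (A B : Matrix m n 𝕜) :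
    (Aᴴ * B).trace = inner 𝕜 (WithLp.toLp 2 fun i ↦ WithLp.toLp 2 (A i))
      (WithLp.toLp 2 fun i ↦ WithLp.toLp 2 (B i)) := by
  simp only [trace, diag_apply, Matrix.mul_apply, conjTranspose_apply, PiLp.inner_apply,
    RCLike.inner_apply']
  exact Finset.sum_comm

lemma re_trace_conjTranspose_mul_le_frobenius_norm_mul (A B : Matrix m n 𝕜) :
    re (Aᴴ * B).trace ≤ ‖A‖ * ‖B‖ := by
  rw [trace_conjTranspose_mul_eq_inner, frobenius_norm_eq_norm_toLp, frobenius_norm_eq_norm_toLp]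
  exact re_inner_le_norm _ _

lemma frobenius_norm_eq_sqrt_re_trace (A : Matrix m n 𝕜) : ‖A‖ = √(re (Aᴴ * A).trace) := by
  rw [trace_conjTranspose_mul_eq_inner, frobenius_norm_eq_norm_toLp]
  exact norm_eq_sqrt_re_inner _

lemma frobenius_norm_eq_sqrt_re_trace_of_isStarProjection {P : Matrix n n 𝕜}
    (hP : IsStarProjection P) : ‖P‖ = √(re P.trace) := by
  have hPH : Pᴴ = P := hP.isSelfAdjoint
  rw [frobenius_norm_eq_sqrt_re_trace, hPH, hP.isIdempotentElem.eq]

theorem re_trace_one_sub_mul_mul_one_sub_le [DecidableEq n] {P : Matrix n n 𝕜}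
    (hP : IsStarProjection P) (S A : Matrix n n 𝕜) :
    re ((1 - P) * S * (1 - P)).trace ≤
      re ((1 - P) * A * (1 - P)).trace + √(re P.trace) * ‖A - S‖ + re (S - A).trace := by
  have hPH : Pᴴ = P := hP.isSelfAdjoint
  have hCS : re (P * (A - S)).trace ≤ √(re P.trace) * ‖A - S‖ := by
    simpa only [hPH, frobenius_norm_eq_sqrt_re_trace_of_isStarProjection hP] using
      re_trace_conjTranspose_mul_le_frobenius_norm_mul P (A - S)
  rw [Matrix.mul_sub, trace_sub, map_sub] at hCS
  simp only [trace_one_sub_mul_mul_one_sub hP.isIdempotentElem, trace_sub, map_sub]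
  linarith

theorem stmt_7_general [DecidableEq n] [DecidableEq r] (S : Matrix n n 𝕜) {A : Matrix n n 𝕜}
    (hA : A.IsHermitian) {μ : n → ℝ} (hμ : ∃ σ : Equiv.Perm n, μ = hA.eigenvalues ∘ σ)
    (e : r ↪ n) {V : Matrix n r 𝕜} (hV : Vᴴ * V = 1)
    (hEig : ∀ j, A *ᵥ V.col j = (μ (e j) : 𝕜) • V.col j) :
    re ((1 - V * Vᴴ) * S * (1 - V * Vᴴ)).trace ≤
      ∑ i ∈ (Finset.univ.map e)ᶜ, μ i + √(Fintype.card r) * ‖A - S‖ + re (S - A).trace := by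
  have htrace : A.trace = ∑ i, (μ i : 𝕜) := by
    obtain ⟨σ, rfl⟩ := hμ
    rw [hA.trace_eq_sum_eigenvalues]
    exact (Equiv.sum_comp σ fun i ↦ (hA.eigenvalues i : 𝕜)).symm
  have hcompl : re ((1 - V * Vᴴ) * A * (1 - V * Vᴴ)).trace = ∑ i ∈ (Finset.univ.map e)ᶜ, μ i := by
    rw [trace_one_sub_mul_mul_one_sub_eq_sum_compl htrace e hV hEig, map_sum]
    simp only [ofReal_re]
  have hrank : re (V * Vᴴ).trace = Fintype.card r := by
    rw [trace_mul_comm, hV, trace_one, natCast_re]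
  have h := re_trace_one_sub_mul_mul_one_sub_le (isStarProjection_mul_conjTranspose hV) S A
  rwa [hcompl, hrank] at h

lemma frob_eq_frobenius_norm {d : ℕ} (A : Matrix (Fin d) (Fin d) ℝ) : frob A = ‖A‖ := by
  simp [frob, frobenius_norm_def, Real.sqrt_eq_rpow]

end Frobenius

lemma filter_le_val_eq_compl_map_castLEEmb {r d : ℕ} (h : r ≤ d) :
    (Finset.univ.filter fun i : Fin d ↦ r ≤ (i : ℕ)) = (Finset.univ.map (Fin.castLEEmb h))ᶜ := by
  ext i
  simp [← Set.mem_range, Fin.range_castLE]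

/-- With `P⊥ = 1 - V Vᵀ` the projection onto the complement of the
`dr`-dimensional leading eigensubspace of `Sh`, one has
`tr(P⊥ S P⊥) ≤ Σ_{i>dr} λ_i(Sh) + √dr ‖Sh − S‖_F + tr(S − Sh)`. -/
theorem stmt_7 {d dr : ℕ} (hdr : dr ≤ d)
    (S Sh : Matrix (Fin d) (Fin d) ℝ)
    (hS : S.PosSemidef) (hSh : Sh.PosSemidef)
    (μS μSh : Fin d → ℝ) (haS : Antitone μS) (haSh : Antitone μSh)
    (eS : ∃ σ : Equiv.Perm (Fin d), μS = hS.1.eigenvalues ∘ σ)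
    (eSh : ∃ σ : Equiv.Perm (Fin d), μSh = hSh.1.eigenvalues ∘ σ)
    (V : Matrix (Fin d) (Fin dr) ℝ)
    (hV : Vᵀ * V = 1)
    (hEig : ∀ j : Fin dr,
      Sh.mulVec (fun i => V i j) = μSh (Fin.castLE hdr j) • (fun i => V i j)) :
    Matrix.trace ((1 - V * Vᵀ) * S * (1 - V * Vᵀ)) ≤
      (∑ i ∈ Finset.univ.filter (fun i : Fin d => dr ≤ (i : ℕ)), μSh i)
        + Real.sqrt dr * frob (Sh - S) + Matrix.trace (S - Sh) := by
  simpa [frob_eq_frobenius_norm, filter_le_val_eq_compl_map_castLEEmb hdr] using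
    stmt_7_general S hSh.1 eSh (Fin.castLEEmb hdr) hV hEig
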